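/- Let μ1, μ2 be Borel probability measures on the closed unit disc D = {z ∈ ℂ : |z| ≤ 1}. Then Σ((μ1+μ2)/2) ≥ (Σ(μ1)+Σ(μ2))/2, with equality if and only if μ1 = μ2; consequently the functional μ ↦ Σ(μ) is strictly concave on the convex set of probability measures on D with Σ(μ) > -∞. -/

import Mathlib

open MeasureTheory Filter Topology
open scoped ENNReal NNReal

noncomputable section

/-- The closed unit disc in `ℂ`. -/
def 𝔻 : Set ℂ := {z : ℂ | ‖z‖ ≤ 1}

/-- `log 2 - log ‖z - w‖ ∈ [0, ∞]`, with the correct value `∞` on the diagonal. -/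
def negLogDist (z w : ℂ) : ℝ≥0∞ :=
  if z = w then ⊤ else ENNReal.ofReal (Real.log 2 - Real.log ‖z - w‖)

/-- The negative logarithmic energy `Σ(μ) = ∬ log |z-w| dμ(z) dμ(w) ∈ [-∞, ∞)` of a
measure of total mass one on the closed unit disc.  Since `log |z-w| ≤ log 2` there,
`Σ(μ) = log 2 - ∬ (log 2 - log |z-w|) dμ dμ`, where the (nonnegative) inner integrand is
given the correct value `∞` on the diagonal. -/
def sigmaE (μ : Measure 𝔻) : EReal :=
  ((Real.log 2 : ℝ) : EReal) -
    ((∫⁻ p : 𝔻 × 𝔻, negLogDist p.1.val p.2.val ∂(μ.prod μ) : ℝ≥0∞) : EReal)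

/-! Energies of signed measures of total mass zero do not see additive constants in the kernel, and
up to such constants `log (2 / |z - w|)` is a mixture of Gaussian kernels: by Frullani's integral,
`2 log (2 / |z - w|) = ∫₀^∞ (exp (-t |z - w|²) - exp (-4t)) / t dt`. A Gaussian kernel is the
characteristic function of a Gaussian measure `γ`, so the energy of `μ - ν` for it is the squared
`L²(γ)`-norm of the difference of the characteristic functions of `μ` and `ν`. This is nonnegative,
and since `γ` has full support it vanishes only if `μ = ν`. So the energy is a strictly convex
quadratic functional on probability measures. -/

open ProbabilityTheory
open scoped ComplexConjugate RealInnerProductSpace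

section Energy

variable {X Y : Type*} [MeasurableSpace X] [MeasurableSpace Y]

/-- The mutual energy `∬ K(x, y) dμ(x) dν(y)` of two measures with respect to a kernel `K`. -/
def mutualEnergy (K : X → X → ℝ≥0∞) (μ ν : Measure X) : ℝ≥0∞ :=
  ∫⁻ p, K p.1 p.2 ∂μ.prod ν

/-- Strict conditional positive definiteness of a kernel `K`: the energy of `μ - ν` is nonnegative
for all finite measures `μ`, `ν` of equal mass, and vanishes only if `μ = ν` when `μ` and `ν` have
finite energy. The four terms of the energy of `μ - ν` are distributed over both sides because they
may be infinite. -/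
structure IsStrictlyCondPosDef (K : X → X → ℝ≥0∞) : Prop where
  mutualEnergy_add_le : ∀ (μ ν : Measure X) [IsFiniteMeasure μ] [IsFiniteMeasure ν],
    μ Set.univ = ν Set.univ →
      mutualEnergy K μ ν + mutualEnergy K ν μ ≤ mutualEnergy K μ μ + mutualEnergy K ν ν
  eq_of_mutualEnergy_add_eq : ∀ (μ ν : Measure X) [IsFiniteMeasure μ] [IsFiniteMeasure ν],
    μ Set.univ = ν Set.univ → mutualEnergy K μ μ ≠ ⊤ → mutualEnergy K ν ν ≠ ⊤ →
      mutualEnergy K μ ν + mutualEnergy K ν μ = mutualEnergy K μ μ + mutualEnergy K ν ν → μ = ν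

lemma mutualEnergy_map {f : X → Y} (hf : MeasurableEmbedding f) (K : Y → Y → ℝ≥0∞)
    (μ ν : Measure X) [SFinite μ] [SFinite ν] :
    mutualEnergy K (μ.map f) (ν.map f) = mutualEnergy (fun x y ↦ K (f x) (f y)) μ ν := by
  rw [mutualEnergy, Measure.map_prod_map _ _ hf.measurable hf.measurable,
    (hf.prodMap hf).lintegral_map]
  rfl

lemma mutualEnergy_const_mul_add_const (K : X → X → ℝ≥0∞) {a : ℝ≥0∞} (ha : a ≠ ⊤) (c : ℝ≥0∞)
    (μ ν : Measure X) [SFinite ν] :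
    mutualEnergy (fun x y ↦ a * K x y + c) μ ν =
      a * mutualEnergy K μ ν + c * (μ Set.univ * ν Set.univ) := by
  rw [mutualEnergy, lintegral_add_right _ measurable_const, lintegral_const_mul' _ _ ha,
    lintegral_const, ← Set.univ_prod_univ, Measure.prod_prod, mutualEnergy]

lemma mutualEnergy_ofReal_add_mutualEnergy_ofReal {k : X → X → ℝ} (hk₀ : ∀ x y, 0 ≤ k x y)
    {μ ν μ' ν' : Measure X} (hk : Integrable (fun p : X × X ↦ k p.1 p.2) (μ.prod ν))
    (hk' : Integrable (fun p : X × X ↦ k p.1 p.2) (μ'.prod ν')) :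
    mutualEnergy (fun x y ↦ ENNReal.ofReal (k x y)) μ ν +
        mutualEnergy (fun x y ↦ ENNReal.ofReal (k x y)) μ' ν' =
      ENNReal.ofReal ((∫ p, k p.1 p.2 ∂μ.prod ν) + ∫ p, k p.1 p.2 ∂μ'.prod ν') := by
  rw [ENNReal.ofReal_add (integral_nonneg fun p ↦ hk₀ _ _) (integral_nonneg fun p ↦ hk₀ _ _),
    ofReal_integral_eq_lintegral_ofReal hk (ae_of_all _ fun p ↦ hk₀ _ _),
    ofReal_integral_eq_lintegral_ofReal hk' (ae_of_all _ fun p ↦ hk₀ _ _)]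
  rfl

lemma mutualEnergy_lintegral {T : Type*} [MeasurableSpace T] (ρ : Measure T) [SFinite ρ]
    {K : T → X → X → ℝ≥0∞} (hK : Measurable fun q : T × X × X ↦ K q.1 q.2.1 q.2.2)
    (μ ν : Measure X) [SFinite μ] [SFinite ν] :
    mutualEnergy (fun x y ↦ ∫⁻ t, K t x y ∂ρ) μ ν = ∫⁻ t, mutualEnergy (K t) μ ν ∂ρ :=
  lintegral_lintegral_swap (hK.comp measurable_swap).aemeasurable

lemma measurable_mutualEnergy {T : Type*} [MeasurableSpace T] {K : T → X → X → ℝ≥0∞}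
    (hK : Measurable fun q : T × X × X ↦ K q.1 q.2.1 q.2.2)
    (μ ν : Measure X) [SFinite μ] [SFinite ν] :
    Measurable fun t ↦ mutualEnergy (K t) μ ν :=
  hK.lintegral_prod_right'

lemma mutualEnergy_smul_add_smul (K : X → X → ℝ≥0∞) (μ ν : Measure X) [SFinite μ] [SFinite ν]
    (a b : ℝ≥0∞) :
    mutualEnergy K (a • μ + b • ν) (a • μ + b • ν) =
      a * a * mutualEnergy K μ μ + a * b * (mutualEnergy K μ ν + mutualEnergy K ν μ) +
        b * b * mutualEnergy K ν ν := by
  simp only [mutualEnergy, Measure.prod_add, Measure.add_prod, Measure.prod_smul_left,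
    Measure.prod_smul_right, lintegral_add_measure, lintegral_smul_measure, smul_eq_mul]
  ring

namespace IsStrictlyCondPosDef

lemma comp_measurableEmbedding {K : Y → Y → ℝ≥0∞} (hK : IsStrictlyCondPosDef K) {f : X → Y}
    (hf : MeasurableEmbedding f) : IsStrictlyCondPosDef fun x y ↦ K (f x) (f y) := by
  have map_univ_eq (μ ν : Measure X) (h : μ Set.univ = ν Set.univ) :
      μ.map f Set.univ = ν.map f Set.univ := by
    simpa only [hf.map_apply, Set.preimage_univ] using h
  constructor <;> intro μ ν _ _ hmass <;> simp only [← mutualEnergy_map hf]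
  · exact hK.mutualEnergy_add_le _ _ (map_univ_eq μ ν hmass)
  · exact fun hμ hν heq ↦ hf.map_injective <|
      hK.eq_of_mutualEnergy_add_eq _ _ (map_univ_eq μ ν hmass) hμ hν heq

lemma of_const_mul_add_const {K : X → X → ℝ≥0∞} {a c : ℝ≥0∞} (ha₀ : a ≠ 0) (ha : a ≠ ⊤)
    (hc : c ≠ ⊤) (h : IsStrictlyCondPosDef fun x y ↦ a * K x y + c) : IsStrictlyCondPosDef K := by
  have energy_add (μ ν μ' ν' : Measure X) [IsFiniteMeasure μ] [IsFiniteMeasure ν]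
      [IsFiniteMeasure μ'] [IsFiniteMeasure ν'] :
      mutualEnergy (fun x y ↦ a * K x y + c) μ ν + mutualEnergy (fun x y ↦ a * K x y + c) μ' ν' =
        a * (mutualEnergy K μ ν + mutualEnergy K μ' ν') +
          c * (μ Set.univ * ν Set.univ + μ' Set.univ * ν' Set.univ) := by
    simp only [mutualEnergy_const_mul_add_const K ha]
    ring
  have const_ne_top (μ : Measure X) [IsFiniteMeasure μ] :
      c * (μ Set.univ * μ Set.univ + μ Set.univ * μ Set.univ) ≠ ⊤ := by finiteness
  constructor <;> intro μ ν _ _ hmass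
  · have hle := h.mutualEnergy_add_le μ ν hmass
    rw [energy_add, energy_add, hmass] at hle
    exact (ENNReal.mul_le_mul_iff_right ha₀ ha).1
      ((ENNReal.add_le_add_iff_right (const_ne_top ν)).1 hle)
  · intro hμ hν heq
    refine h.eq_of_mutualEnergy_add_eq μ ν hmass ?_ ?_ ?_
    · rw [mutualEnergy_const_mul_add_const K ha]; finiteness
    · rw [mutualEnergy_const_mul_add_const K ha]; finiteness
    · rw [energy_add, energy_add, heq, hmass]

lemma lintegral {T : Type*} [MeasurableSpace T] {ρ : Measure T} [SFinite ρ] [NeZero ρ]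
    {K : T → X → X → ℝ≥0∞} (hK : Measurable fun q : T × X × X ↦ K q.1 q.2.1 q.2.2)
    (h : ∀ᵐ t ∂ρ, IsStrictlyCondPosDef (K t)) :
    IsStrictlyCondPosDef fun x y ↦ ∫⁻ t, K t x y ∂ρ := by
  have meas (μ ν : Measure X) [IsFiniteMeasure μ] [IsFiniteMeasure ν] :=
    measurable_mutualEnergy hK μ ν
  have energy_add (μ ν μ' ν' : Measure X) [IsFiniteMeasure μ] [IsFiniteMeasure ν]
      [IsFiniteMeasure μ'] [IsFiniteMeasure ν'] :
      mutualEnergy (fun x y ↦ ∫⁻ t, K t x y ∂ρ) μ ν +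
          mutualEnergy (fun x y ↦ ∫⁻ t, K t x y ∂ρ) μ' ν' =
        ∫⁻ t, (mutualEnergy (K t) μ ν + mutualEnergy (K t) μ' ν') ∂ρ := by
    rw [mutualEnergy_lintegral ρ hK, mutualEnergy_lintegral ρ hK, lintegral_add_left (meas μ ν)]
  have ae_le (μ ν : Measure X) [IsFiniteMeasure μ] [IsFiniteMeasure ν]
      (hmass : μ Set.univ = ν Set.univ) :
      ∀ᵐ t ∂ρ, mutualEnergy (K t) μ ν + mutualEnergy (K t) ν μ ≤
        mutualEnergy (K t) μ μ + mutualEnergy (K t) ν ν :=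
    h.mono fun t ht ↦ ht.mutualEnergy_add_le μ ν hmass
  constructor <;> intro μ ν _ _ hmass
  · rw [energy_add, energy_add]
    exact lintegral_mono_ae (ae_le μ ν hmass)
  · intro hμ hν heq
    have hfin := ENNReal.add_ne_top.2 ⟨hμ, hν⟩
    rw [← heq, energy_add] at hfin
    rw [energy_add, energy_add] at heq
    rw [mutualEnergy_lintegral ρ hK] at hμ hν
    have ae_eq := ae_eq_of_ae_le_of_lintegral_le (ae_le μ ν hmass) hfin
      ((meas μ μ).add (meas ν ν)).aemeasurable heq.ge
    obtain ⟨t, ht, ht_eq, htμ, htν⟩ := (h.and (ae_eq.and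
      ((ae_lt_top (meas μ μ) hμ).and (ae_lt_top (meas ν ν) hν)))).exists
    exact ht.eq_of_mutualEnergy_add_eq μ ν hmass htμ.ne htν.ne ht_eq

section Convexity

variable {K : X → X → ℝ≥0∞} {μ ν : Measure X} [IsFiniteMeasure μ] [IsFiniteMeasure ν] {a b : ℝ≥0∞}

lemma mutualEnergy_convexCombo_le (hK : IsStrictlyCondPosDef K)
    (hmass : μ Set.univ = ν Set.univ) (hab : a + b = 1) :
    mutualEnergy K (a • μ + b • ν) (a • μ + b • ν) ≤
      a * mutualEnergy K μ μ + b * mutualEnergy K ν ν :=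
  calc mutualEnergy K (a • μ + b • ν) (a • μ + b • ν)
    _ = a * a * mutualEnergy K μ μ + a * b * (mutualEnergy K μ ν + mutualEnergy K ν μ) +
        b * b * mutualEnergy K ν ν := mutualEnergy_smul_add_smul K μ ν a b
    _ ≤ a * a * mutualEnergy K μ μ + a * b * (mutualEnergy K μ μ + mutualEnergy K ν ν) +
        b * b * mutualEnergy K ν ν := by
      gcongr _ + _ * ?_ + _
      exact hK.mutualEnergy_add_le μ ν hmass
    _ = (a + b) * (a * mutualEnergy K μ μ + b * mutualEnergy K ν ν) := by ring
    _ = a * mutualEnergy K μ μ + b * mutualEnergy K ν ν := by rw [hab, one_mul]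

lemma mutualEnergy_convexCombo_lt (hK : IsStrictlyCondPosDef K)
    (hmass : μ Set.univ = ν Set.univ) (hab : a + b = 1) (ha : a ≠ 0) (hb : b ≠ 0)
    (hμ : mutualEnergy K μ μ ≠ ⊤) (hν : mutualEnergy K ν ν ≠ ⊤) (hne : μ ≠ ν) :
    mutualEnergy K (a • μ + b • ν) (a • μ + b • ν) <
      a * mutualEnergy K μ μ + b * mutualEnergy K ν ν := by
  have ha_top : a ≠ ⊤ := ne_top_of_le_ne_top ENNReal.one_ne_top (hab ▸ le_self_add)
  have hb_top : b ≠ ⊤ := ne_top_of_le_ne_top ENNReal.one_ne_top (hab ▸ le_add_self)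
  have cross_lt : mutualEnergy K μ ν + mutualEnergy K ν μ <
      mutualEnergy K μ μ + mutualEnergy K ν ν :=
    (hK.mutualEnergy_add_le μ ν hmass).lt_of_ne fun heq ↦
      hne (hK.eq_of_mutualEnergy_add_eq μ ν hmass hμ hν heq)
  calc mutualEnergy K (a • μ + b • ν) (a • μ + b • ν)
    _ = a * a * mutualEnergy K μ μ + b * b * mutualEnergy K ν ν +
        a * b * (mutualEnergy K μ ν + mutualEnergy K ν μ) := by
      rw [mutualEnergy_smul_add_smul, add_right_comm]
    _ < a * a * mutualEnergy K μ μ + b * b * mutualEnergy K ν ν +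
        a * b * (mutualEnergy K μ μ + mutualEnergy K ν ν) := by
      refine ENNReal.add_lt_add_left (by finiteness) ?_
      exact (ENNReal.mul_lt_mul_iff_right (mul_ne_zero ha hb) (by finiteness)).2 cross_lt
    _ = (a + b) * (a * mutualEnergy K μ μ + b * mutualEnergy K ν ν) := by ring
    _ = a * mutualEnergy K μ μ + b * mutualEnergy K ν ν := by rw [hab, one_mul]

end Convexity

end IsStrictlyCondPosDef

end Energy

section CharFun

variable {E : Type*} [NormedAddCommGroup E] [InnerProductSpace ℝ E] [MeasurableSpace E]
  [BorelSpace E] [SecondCountableTopology E]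

lemma integral_charFun_mul_conj_charFun (γ μ ν : Measure E) [IsFiniteMeasure γ]
    [IsFiniteMeasure μ] [IsFiniteMeasure ν] :
    ∫ v, charFun μ v * conj (charFun ν v) ∂γ = ∫ p, charFun γ (p.1 - p.2) ∂μ.prod ν := by
  have charFun_mul_conj (v : E) : charFun μ v * conj (charFun ν v) =
      ∫ p, Complex.exp (⟪v, p.1 - p.2⟫ * Complex.I) ∂μ.prod ν := by
    rw [← charFun_neg, charFun_apply, charFun_apply, ← integral_prod_mul]
    refine integral_congr_ae (ae_of_all _ fun p ↦ ?_)
    dsimp only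
    rw [← Complex.exp_add, inner_neg_right, inner_sub_right, real_inner_comm v p.1,
      real_inner_comm v p.2]
    push_cast
    ring_nf
  have integrable_exp : Integrable (fun q : E × E × E ↦
      Complex.exp (⟪q.1, q.2.1 - q.2.2⟫ * Complex.I)) (γ.prod (μ.prod ν)) :=
    .of_bound (by fun_prop) 1 (ae_of_all _ fun q ↦ (Complex.norm_exp_ofReal_mul_I _).le)
  simp only [charFun_mul_conj, charFun_apply (μ := γ)]
  exact integral_integral_swap integrable_exp

lemma integrable_charFun_mul_conj_charFun (γ μ ν : Measure E) [IsFiniteMeasure γ]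
    [IsFiniteMeasure μ] [IsFiniteMeasure ν] :
    Integrable (fun v ↦ charFun μ v * conj (charFun ν v)) γ := by
  refine .of_bound (by fun_prop) (μ.real Set.univ * ν.real Set.univ) (ae_of_all _ fun v ↦ ?_)
  rw [norm_mul, RCLike.norm_conj]
  gcongr <;> exact norm_charFun_le v

lemma integrable_norm_charFun_sub_sq (γ μ ν : Measure E) [IsFiniteMeasure γ]
    [IsFiniteMeasure μ] [IsFiniteMeasure ν] :
    Integrable (fun v ↦ ‖charFun μ v - charFun ν v‖ ^ 2) γ := by
  refine .of_bound (by fun_prop) ((μ.real Set.univ + ν.real Set.univ) ^ 2) (ae_of_all _ fun v ↦ ?_)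
  rw [norm_pow, norm_norm]
  gcongr
  exact (norm_sub_le _ _).trans (add_le_add (norm_charFun_le v) (norm_charFun_le v))

lemma integral_norm_charFun_sub_sq (γ μ ν : Measure E) [IsFiniteMeasure γ]
    [IsFiniteMeasure μ] [IsFiniteMeasure ν] :
    ((∫ v, ‖charFun μ v - charFun ν v‖ ^ 2 ∂γ : ℝ) : ℂ) =
      (∫ p, charFun γ (p.1 - p.2) ∂μ.prod μ) + (∫ p, charFun γ (p.1 - p.2) ∂ν.prod ν) -
        ((∫ p, charFun γ (p.1 - p.2) ∂μ.prod ν) + ∫ p, charFun γ (p.1 - p.2) ∂ν.prod μ) := by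
  have expand (v : E) : ((‖charFun μ v - charFun ν v‖ ^ 2 : ℝ) : ℂ) =
      charFun μ v * conj (charFun μ v) + charFun ν v * conj (charFun ν v) -
        (charFun μ v * conj (charFun ν v) + charFun ν v * conj (charFun μ v)) := by
    push_cast
    rw [← Complex.mul_conj', map_sub]
    ring
  have integrable := integrable_charFun_mul_conj_charFun γ
  simp only [← integral_complex_ofReal, expand, ← integral_charFun_mul_conj_charFun]
  rw [integral_sub ((integrable μ μ).fun_add (integrable ν ν))
    ((integrable μ ν).fun_add (integrable ν μ)),
    integral_add (integrable μ μ) (integrable ν ν), integral_add (integrable μ ν) (integrable ν μ)]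

lemma eq_of_integral_norm_charFun_sub_sq_eq_zero [CompleteSpace E] {γ μ ν : Measure E}
    [IsFiniteMeasure γ] [γ.IsOpenPosMeasure] [IsFiniteMeasure μ] [IsFiniteMeasure ν]
    (h : ∫ v, ‖charFun μ v - charFun ν v‖ ^ 2 ∂γ = 0) : μ = ν := by
  rw [integral_eq_zero_iff_of_nonneg (fun v ↦ by positivity)
    (integrable_norm_charFun_sub_sq γ μ ν)] at h
  have norm_sq_eq_zero := (Continuous.ae_eq_iff_eq γ (by fun_prop) (by fun_prop)).1 h
  refine Measure.ext_of_charFun (funext fun v ↦ ?_)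
  simpa [sub_eq_zero] using congrFun norm_sq_eq_zero v

lemma isStrictlyCondPosDef_of_charFun_eq [CompleteSpace E] {γ : Measure E} [IsFiniteMeasure γ]
    [γ.IsOpenPosMeasure] {k : E → ℝ} (hk : ∀ x, charFun γ x = k x) (hk₀ : ∀ x, 0 ≤ k x) :
    IsStrictlyCondPosDef fun x y : E ↦ ENNReal.ofReal (k (x - y)) := by
  have k_eq : k = fun x ↦ (charFun γ x).re := by ext x; rw [hk, Complex.ofReal_re]
  have integrable_k (μ ν : Measure E) [IsFiniteMeasure μ] [IsFiniteMeasure ν] :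
      Integrable (fun p : E × E ↦ k (p.1 - p.2)) (μ.prod ν) := by
    refine .of_bound ?_ (γ.real Set.univ) (ae_of_all _ fun p ↦ ?_)
    · rw [k_eq]; fun_prop
    · rw [← Complex.norm_real, ← hk]; exact norm_charFun_le _
  have integral_sq (μ ν : Measure E) [IsFiniteMeasure μ] [IsFiniteMeasure ν] :
      ∫ v, ‖charFun μ v - charFun ν v‖ ^ 2 ∂γ =
        (∫ p, k (p.1 - p.2) ∂μ.prod μ) + (∫ p, k (p.1 - p.2) ∂ν.prod ν) -
          ((∫ p, k (p.1 - p.2) ∂μ.prod ν) + ∫ p, k (p.1 - p.2) ∂ν.prod μ) := by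
    have := integral_norm_charFun_sub_sq γ μ ν
    simp only [hk, integral_complex_ofReal] at this
    exact_mod_cast this
  have energy_add (μ ν μ' ν' : Measure E) [IsFiniteMeasure μ] [IsFiniteMeasure ν]
      [IsFiniteMeasure μ'] [IsFiniteMeasure ν'] :=
    mutualEnergy_ofReal_add_mutualEnergy_ofReal (fun x y ↦ hk₀ (x - y)) (integrable_k μ ν)
      (integrable_k μ' ν')
  have integral_k_nonneg (μ ν : Measure E) : 0 ≤ ∫ p, k (p.1 - p.2) ∂μ.prod ν :=
    integral_nonneg fun p ↦ hk₀ _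
  constructor <;> intro μ ν _ _ _
  · rw [energy_add, energy_add]
    refine ENNReal.ofReal_le_ofReal (sub_nonneg.1 ?_)
    rw [← integral_sq]
    positivity
  · intro _ _ heq
    rw [energy_add, energy_add, ENNReal.ofReal_eq_ofReal_iff
      (add_nonneg (integral_k_nonneg _ _) (integral_k_nonneg _ _))
      (add_nonneg (integral_k_nonneg _ _) (integral_k_nonneg _ _))] at heq
    exact eq_of_integral_norm_charFun_sub_sq_eq_zero (γ := γ)
      ((integral_sq μ ν).trans (sub_eq_zero.2 heq.symm))

end CharFun

section Gaussian

variable {E : Type*} [NormedAddCommGroup E] [InnerProductSpace ℝ E] [FiniteDimensional ℝ E]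
  [MeasurableSpace E] [BorelSpace E]

instance isOpenPosMeasure_stdGaussian : (stdGaussian E).IsOpenPosMeasure := by
  have : (gaussianReal 0 1).IsOpenPosMeasure :=
    (gaussianReal_absolutelyContinuous' 0 one_ne_zero).isOpenPosMeasure
  refine Continuous.isOpenPosMeasure_map (by fun_prop) fun x ↦ ?_
  exact ⟨(stdOrthonormalBasis ℝ E).repr x, (stdOrthonormalBasis ℝ E).sum_repr x⟩

lemma isStrictlyCondPosDef_exp_neg_norm_sub_sq_div_two :
    IsStrictlyCondPosDef fun x y : E ↦ ENNReal.ofReal (Real.exp (-‖x - y‖ ^ 2 / 2)) :=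
  isStrictlyCondPosDef_of_charFun_eq (γ := stdGaussian E) (k := fun x ↦ Real.exp (-‖x‖ ^ 2 / 2))
    (fun x ↦ by rw [charFun_stdGaussian]; push_cast; rfl) fun x ↦ (Real.exp_pos _).le

lemma isStrictlyCondPosDef_exp_neg_mul_norm_sub_sq {t : ℝ} (ht : 0 < t) :
    IsStrictlyCondPosDef fun x y : E ↦ ENNReal.ofReal (Real.exp (-(t * ‖x - y‖ ^ 2))) := by
  have rescale (x y : E) : -‖√(2 * t) • x - √(2 * t) • y‖ ^ 2 / 2 = -(t * ‖x - y‖ ^ 2) := by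
    rw [← smul_sub, norm_smul, mul_pow, Real.norm_eq_abs, sq_abs, Real.sq_sqrt (by positivity)]
    ring
  have smul_embedding : MeasurableEmbedding fun x : E ↦ √(2 * t) • x :=
    measurableEmbedding_const_smul₀ (by positivity)
  simpa only [rescale] using
    isStrictlyCondPosDef_exp_neg_norm_sub_sq_div_two.comp_measurableEmbedding smul_embedding

end Gaussian

section Frullani

lemma lintegral_exp_neg_mul_Ioi {s : ℝ} (hs : 0 < s) :
    ∫⁻ t in Set.Ioi (0 : ℝ), ENNReal.ofReal (Real.exp (-(t * s))) = ENNReal.ofReal s⁻¹ := by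
  have neg_mul_comm (t : ℝ) : -(t * s) = -s * t := by ring
  simp only [neg_mul_comm]
  rw [← ofReal_integral_eq_lintegral_ofReal (integrableOn_exp_mul_Ioi (neg_neg_of_pos hs) 0)
    (ae_of_all _ fun t ↦ (Real.exp_pos _).le), integral_exp_mul_Ioi (neg_neg_of_pos hs) 0]
  simp

lemma lintegral_exp_neg_mul_Ioc {a b t : ℝ} (hab : a ≤ b) (ht : t ≠ 0) :
    ∫⁻ s in Set.Ioc a b, ENNReal.ofReal (Real.exp (-(t * s))) =
      ENNReal.ofReal ((Real.exp (-(t * a)) - Real.exp (-(t * b))) / t) := by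
  have continuous_exp : Continuous fun s : ℝ ↦ Real.exp (-(t * s)) := by fun_prop
  have hasDerivAt_primitive (s : ℝ) :
      HasDerivAt (fun s ↦ -Real.exp (-(t * s)) / t) (Real.exp (-(t * s))) s := by
    convert! (((hasDerivAt_id s).const_mul t).neg.exp.neg.div_const t) using 1
    simp [ht]
  rw [← ofReal_integral_eq_lintegral_ofReal
    (continuous_exp.integrableOn_Icc.mono_set Set.Ioc_subset_Icc_self)
    (ae_of_all _ fun s ↦ (Real.exp_pos _).le), ← intervalIntegral.integral_of_le hab,
    intervalIntegral.integral_eq_sub_of_hasDerivAt (fun s _ ↦ hasDerivAt_primitive s)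
      (continuous_exp.intervalIntegrable _ _)]
  ring_nf

lemma lintegral_frullani_exp {a b : ℝ} (ha : 0 ≤ a) (hab : a ≤ b) :
    ∫⁻ t in Set.Ioi (0 : ℝ), ENNReal.ofReal ((Real.exp (-(t * a)) - Real.exp (-(t * b))) / t) =
      ∫⁻ s in Set.Ioc a b, ENNReal.ofReal s⁻¹ := by
  rw [setLIntegral_congr_fun measurableSet_Ioi fun t ht ↦
      (lintegral_exp_neg_mul_Ioc hab (ne_of_gt ht)).symm,
    lintegral_lintegral_swap (by fun_prop),
    setLIntegral_congr_fun measurableSet_Ioc fun s hs ↦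
      lintegral_exp_neg_mul_Ioi (ha.trans_lt hs.1)]

lemma lintegral_inv_Ioc_zero {b : ℝ} (hb : 0 < b) :
    ∫⁻ s in Set.Ioc 0 b, ENNReal.ofReal s⁻¹ = ⊤ := by
  by_contra hne
  have inv_integrableOn : IntegrableOn (fun s : ℝ ↦ s⁻¹) (Set.Ioc 0 b) :=
    (lintegral_ofReal_ne_top_iff_integrable (by fun_prop) ((ae_restrict_iff' measurableSet_Ioc).2
      (ae_of_all _ fun s hs ↦ (inv_pos.2 hs.1).le))).1 hne
  rw [← intervalIntegrable_iff_integrableOn_Ioc_of_le hb.le, intervalIntegrable_inv_iff]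
    at inv_integrableOn
  exact inv_integrableOn.elim hb.ne fun h ↦ h Set.left_mem_uIcc

lemma lintegral_inv_Ioc {a b : ℝ} (ha : 0 < a) (hab : a ≤ b) :
    ∫⁻ s in Set.Ioc a b, ENNReal.ofReal s⁻¹ = ENNReal.ofReal (Real.log (b / a)) := by
  have continuousOn_inv : ContinuousOn (fun s : ℝ ↦ s⁻¹) (Set.Icc a b) :=
    continuousOn_inv₀.mono fun s hs ↦ (ha.trans_le hs.1).ne'
  rw [← ofReal_integral_eq_lintegral_ofReal
    (continuousOn_inv.integrableOn_Icc.mono_set Set.Ioc_subset_Icc_self)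
    ((ae_restrict_iff' measurableSet_Ioc).2
      (ae_of_all _ fun s hs ↦ (inv_pos.2 (ha.trans hs.1)).le)),
    ← intervalIntegral.integral_of_le hab, integral_inv_of_pos ha (ha.trans_le hab)]

lemma two_mul_negLogDist {z w : ℂ} (h : ‖z - w‖ ≤ 2) :
    2 * negLogDist z w = ∫⁻ t in Set.Ioi (0 : ℝ),
      ENNReal.ofReal ((Real.exp (-(t * ‖z - w‖ ^ 2)) - Real.exp (-(t * 2 ^ 2))) / t) := by
  rw [lintegral_frullani_exp (by positivity) (by gcongr), negLogDist]
  split_ifs with hzw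
  · rw [hzw, sub_self, norm_zero, zero_pow two_ne_zero, lintegral_inv_Ioc_zero (by positivity),
      ENNReal.mul_top two_ne_zero]
  · have norm_pos : 0 < ‖z - w‖ := norm_sub_pos_iff.2 hzw
    rw [lintegral_inv_Ioc (by positivity) (by gcongr), ← div_pow, Real.log_pow,
      Real.log_div two_ne_zero norm_pos.ne', ENNReal.ofReal_mul (by positivity)]
    norm_num

end Frullani

section Disc

/-- The kernel `log (2 / |z - w|)` on the closed unit disc, equal to `∞` on the diagonal. -/
def discKernel (z w : 𝔻) : ℝ≥0∞ := negLogDist z w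

lemma norm_sub_le_two (z w : 𝔻) : ‖(z : ℂ) - w‖ ≤ 2 :=
  (norm_sub_le _ _).trans ((add_le_add z.2 w.2).trans_eq one_add_one_eq_two)

lemma measurableSet_disc : MeasurableSet 𝔻 :=
  (isClosed_le continuous_norm continuous_const).measurableSet

lemma isStrictlyCondPosDef_frullani_integrand {t : ℝ} (ht : 0 < t) :
    IsStrictlyCondPosDef fun z w : 𝔻 ↦ ENNReal.ofReal
      ((Real.exp (-(t * ‖(z : ℂ) - w‖ ^ 2)) - Real.exp (-(t * 2 ^ 2))) / t) := by
  refine .of_const_mul_add_const (a := .ofReal t) (c := .ofReal (Real.exp (-(t * 2 ^ 2))))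
    (by simpa using ht) ENNReal.ofReal_ne_top ENNReal.ofReal_ne_top ?_
  have gaussian_restrict :=
    (isStrictlyCondPosDef_exp_neg_mul_norm_sub_sq (E := ℂ) ht).comp_measurableEmbedding
      (MeasurableEmbedding.subtype_coe measurableSet_disc)
  convert! gaussian_restrict using 3 with z w
  have exp_le : Real.exp (-(t * 2 ^ 2)) ≤ Real.exp (-(t * ‖(z : ℂ) - w‖ ^ 2)) := by
    gcongr
    exact norm_sub_le_two z w
  rw [← ENNReal.ofReal_mul ht.le, mul_div_cancel₀ _ ht.ne',
    ← ENNReal.ofReal_add (sub_nonneg.2 exp_le) (Real.exp_pos _).le, sub_add_cancel]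

lemma isStrictlyCondPosDef_discKernel : IsStrictlyCondPosDef discKernel := by
  refine .of_const_mul_add_const (a := 2) (c := 0) two_ne_zero ENNReal.ofNat_ne_top
    ENNReal.zero_ne_top ?_
  simp only [add_zero, discKernel, two_mul_negLogDist (norm_sub_le_two _ _)]
  have : NeZero (volume.restrict (Set.Ioi (0 : ℝ))) := ⟨by simp⟩
  refine .lintegral (by fun_prop) ?_
  exact (ae_restrict_iff' measurableSet_Ioi).2
    (ae_of_all _ fun t ht ↦ isStrictlyCondPosDef_frullani_integrand ht)

end Disc

section SigmaE

lemma ofReal_add_ofReal_one_sub {t : ℝ} (ht₀ : 0 ≤ t) (ht₁ : t ≤ 1) :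
    ENNReal.ofReal t + ENNReal.ofReal (1 - t) = 1 := by
  rw [← ENNReal.ofReal_add ht₀ (sub_nonneg.2 ht₁), add_sub_cancel, ENNReal.ofReal_one]

variable {μ ν : Measure 𝔻}

lemma sigmaE_eq_log_two_sub (μ : Measure 𝔻) :
    sigmaE μ = (Real.log 2 : EReal) - mutualEnergy discKernel μ μ := rfl

lemma sigmaE_ne_bot_iff : sigmaE μ ≠ ⊥ ↔ mutualEnergy discKernel μ μ ≠ ⊤ := by
  rw [sigmaE_eq_log_two_sub, not_iff_not]
  induction mutualEnergy discKernel μ μ using ENNReal.recTopCoe with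
  | top => simp
  | coe x => exact iff_of_false (EReal.coe_ne_bot (Real.log 2 - x)) ENNReal.coe_ne_top

lemma mul_sigmaE_add_mul_sigmaE (hμ : sigmaE μ ≠ ⊥) (hν : sigmaE ν ≠ ⊥) {t : ℝ} (ht₀ : 0 ≤ t)
    (ht₁ : t ≤ 1) :
    (t : EReal) * sigmaE μ + ((1 - t : ℝ) : EReal) * sigmaE ν =
      (Real.log 2 : EReal) - ((ENNReal.ofReal t * mutualEnergy discKernel μ μ +
        ENNReal.ofReal (1 - t) * mutualEnergy discKernel ν ν : ℝ≥0∞) : EReal) := by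
  rw [sigmaE_ne_bot_iff] at hμ hν
  rw [sigmaE_eq_log_two_sub, sigmaE_eq_log_two_sub]
  lift mutualEnergy discKernel μ μ to ℝ≥0 using hμ with x
  lift mutualEnergy discKernel ν ν to ℝ≥0 using hν with y
  simp only [EReal.coe_ennreal_add, EReal.coe_ennreal_mul, EReal.coe_ennreal_ofReal,
    max_eq_left ht₀, max_eq_left (sub_nonneg.2 ht₁), EReal.coe_nnreal_eq_coe_real]
  norm_cast
  ring

variable [IsProbabilityMeasure μ] [IsProbabilityMeasure ν]

theorem sigmaE_concave {t : ℝ} (ht₀ : 0 < t) (ht₁ : t < 1) :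
    (t : EReal) * sigmaE μ + ((1 - t : ℝ) : EReal) * sigmaE ν ≤
      sigmaE (ENNReal.ofReal t • μ + ENNReal.ofReal (1 - t) • ν) := by
  rcases eq_or_ne (sigmaE μ) ⊥ with hμ | hμ
  · rw [hμ, EReal.coe_mul_bot_of_pos ht₀, EReal.bot_add]
    exact bot_le
  rcases eq_or_ne (sigmaE ν) ⊥ with hν | hν
  · rw [hν, EReal.coe_mul_bot_of_pos (sub_pos.2 ht₁), EReal.add_bot]
    exact bot_le
  rw [mul_sigmaE_add_mul_sigmaE hμ hν ht₀.le ht₁.le, sigmaE_eq_log_two_sub]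
  refine EReal.sub_le_sub le_rfl (EReal.coe_ennreal_le_coe_ennreal_iff.2 ?_)
  exact isStrictlyCondPosDef_discKernel.mutualEnergy_convexCombo_le (by simp)
    (ofReal_add_ofReal_one_sub ht₀.le ht₁.le)

theorem sigmaE_strictConcave (hμ : sigmaE μ ≠ ⊥) (hν : sigmaE ν ≠ ⊥) (hne : μ ≠ ν) {t : ℝ}
    (ht₀ : 0 < t) (ht₁ : t < 1) :
    (t : EReal) * sigmaE μ + ((1 - t : ℝ) : EReal) * sigmaE ν <
      sigmaE (ENNReal.ofReal t • μ + ENNReal.ofReal (1 - t) • ν) := by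
  rw [mul_sigmaE_add_mul_sigmaE hμ hν ht₀.le ht₁.le, sigmaE_eq_log_two_sub]
  have energy_lt := isStrictlyCondPosDef_discKernel.mutualEnergy_convexCombo_lt (by simp)
    (ofReal_add_ofReal_one_sub ht₀.le ht₁.le) (by simpa using ht₀) (by simpa using ht₁)
    (sigmaE_ne_bot_iff.1 hμ) (sigmaE_ne_bot_iff.1 hν) hne
  exact EReal.sub_lt_sub_of_le_of_gt le_rfl (EReal.coe_ennreal_lt_coe_ennreal_iff.2 energy_lt)
    (by simp) (by simp)

lemma sigmaE_convexCombo_eq_iff (hμ : sigmaE μ ≠ ⊥) (hν : sigmaE ν ≠ ⊥) {t : ℝ} (ht₀ : 0 < t)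
    (ht₁ : t < 1) :
    (t : EReal) * sigmaE μ + ((1 - t : ℝ) : EReal) * sigmaE ν =
      sigmaE (ENNReal.ofReal t • μ + ENNReal.ofReal (1 - t) • ν) ↔ μ = ν := by
  refine ⟨not_imp_not.1 fun hne ↦ (sigmaE_strictConcave hμ hν hne ht₀ ht₁).ne, ?_⟩
  rintro rfl
  rw [mul_sigmaE_add_mul_sigmaE hμ hμ ht₀.le ht₁.le, ← add_mul, ← add_smul,
    ofReal_add_ofReal_one_sub ht₀.le ht₁.le, one_mul, one_smul, sigmaE_eq_log_two_sub]

end SigmaE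

section Midpoint

lemma two_mul_inv_two_mul (x : EReal) : 2 * (((2⁻¹ : ℝ) : EReal) * x) = x := by
  have two_mul_inv : (2 : EReal) * ((2⁻¹ : ℝ) : EReal) = 1 := by
    rw [← EReal.coe_one, ← mul_inv_cancel₀ (two_ne_zero (α := ℝ)), EReal.coe_mul]
    rfl
  rw [← mul_assoc, two_mul_inv, one_mul]

lemma strictMono_two_mul : StrictMono fun x : EReal ↦ 2 * x := by
  refine Monotone.strictMono_of_injective (fun x y h ↦ mul_le_mul_of_nonneg_left h zero_le_two) ?_
  refine Function.LeftInverse.injective (g := fun x ↦ ((2⁻¹ : ℝ) : EReal) * x) fun x ↦ ?_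
  exact (mul_left_comm _ _ _).trans (two_mul_inv_two_mul x)

lemma two_mul_midpoint (x y : EReal) :
    2 * (((2⁻¹ : ℝ) : EReal) * x + ((1 - 2⁻¹ : ℝ) : EReal) * y) = x + y := by
  rw [EReal.left_distrib_of_nonneg_of_ne_top zero_le_two (by decide), two_mul_inv_two_mul,
    show (1 - 2⁻¹ : ℝ) = 2⁻¹ by norm_num, two_mul_inv_two_mul]

lemma inv_two_smul_add {X : Type*} [MeasurableSpace X] (μ ν : Measure X) :
    (2⁻¹ : ℝ≥0∞) • (μ + ν) = ENNReal.ofReal 2⁻¹ • μ + ENNReal.ofReal (1 - 2⁻¹) • ν := by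
  rw [show (1 - 2⁻¹ : ℝ) = 2⁻¹ by norm_num, ENNReal.ofReal_inv_of_pos two_pos,
    ENNReal.ofReal_ofNat, smul_add]

end Midpoint

/-- **Strict midpoint concavity of the logarithmic energy** on probability measures on
the closed unit disc: `Σ((μ₁+μ₂)/2) ≥ (Σ(μ₁)+Σ(μ₂))/2`, with equality (when the
energies are finite) if and only if `μ₁ = μ₂`; consequently `Σ` is strictly concave on
the convex set of probability measures with `Σ(μ) > -∞`. -/
theorem logEnergy_strictly_concave (μ₁ μ₂ : ProbabilityMeasure 𝔻) :
    (sigmaE (μ₁ : Measure 𝔻) + sigmaE (μ₂ : Measure 𝔻) ≤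
      2 * sigmaE ((2⁻¹ : ℝ≥0∞) • ((μ₁ : Measure 𝔻) + (μ₂ : Measure 𝔻)))) ∧
    (sigmaE (μ₁ : Measure 𝔻) ≠ ⊥ → sigmaE (μ₂ : Measure 𝔻) ≠ ⊥ →
      (sigmaE (μ₁ : Measure 𝔻) + sigmaE (μ₂ : Measure 𝔻) =
          2 * sigmaE ((2⁻¹ : ℝ≥0∞) • ((μ₁ : Measure 𝔻) + (μ₂ : Measure 𝔻))) ↔ μ₁ = μ₂)) ∧
    (∀ t : ℝ, 0 < t → t < 1 → μ₁ ≠ μ₂ →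
      sigmaE (μ₁ : Measure 𝔻) ≠ ⊥ → sigmaE (μ₂ : Measure 𝔻) ≠ ⊥ →
      ((t : ℝ) : EReal) * sigmaE (μ₁ : Measure 𝔻) +
          (((1 - t : ℝ)) : EReal) * sigmaE (μ₂ : Measure 𝔻) <
        sigmaE (ENNReal.ofReal t • (μ₁ : Measure 𝔻) +
          ENNReal.ofReal (1 - t) • (μ₂ : Measure 𝔻))) := by
  have half_pos : (0 : ℝ) < 2⁻¹ := by norm_num
  have half_lt_one : (2⁻¹ : ℝ) < 1 := by norm_num
  rw [← two_mul_midpoint, inv_two_smul_add]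
  refine ⟨?concave, fun hμ₁ hμ₂ ↦ ?eq_iff, fun t ht₀ ht₁ hne hμ₁ hμ₂ ↦ ?strict⟩
  case concave => exact strictMono_two_mul.le_iff_le.2 (sigmaE_concave half_pos half_lt_one)
  case eq_iff =>
    rw [strictMono_two_mul.injective.eq_iff, sigmaE_convexCombo_eq_iff hμ₁ hμ₂ half_pos half_lt_one]
    exact Subtype.ext_iff.symm
  case strict => exact sigmaE_strictConcave hμ₁ hμ₂ (Subtype.coe_ne_coe.2 hne) ht₀ ht₁
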